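/- Let A and B be tuples of complex numbers all of whose entries have real part of absolute value less than 1/16, with distinguished entries α̂ of A and β̂ of B; write A′ = A minus α̂ and B′ = B minus β̂. Let s be a complex number with |ℜs| < 1/16. Set C := A′ ∪ {−β̂−s} and D := B′_s ∪ {−α̂}, where B′_s is B′ with s added to every entry. Then for every prime p, ∏_{α∈A′, β∈B′}(1 − p^{−1−α−β−s}) · Σ_{d≥0} Σ_{q=0}^{1} (−1)^q G_A(1−α̂, p^{d+q}) G_B(1−β̂, p^{d+q}) p^{−d−ds − q(2−α̂−β̂)} = ∏_{c∈C, d′∈D}(1 − p^{−1−c−d′}) · ∫₀¹ ∏_{c∈C}(1 − e(−θ) p^{−1/2−c})^{−1} ∏_{d′∈D}(1 − e(θ) p^{−1/2−d′})^{−1} dθ, where e(θ) := e^{2πiθ}. -/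

import Mathlib

open Complex

/-- Shifted divisor function: `tauSh A n = ∑_{n₁⋯n_k = n} n₁^{-α₁}⋯n_k^{-α_k}`,
defined by iterated Dirichlet convolution. -/
noncomputable def tauSh : List ℂ → ℕ → ℂ
  | [], n => if n = 1 then 1 else 0
  | a :: A, n => ∑ d ∈ n.divisors, (d : ℂ) ^ (-a) * tauSh A (n / d)

/-- `g_A(s,q) = ∏_{p ∣ q} ( ∏_{α∈A} (1 − p^{−s−α}) · ∑_{j≥0} τ_A(p^{j+q_p}) p^{−js} )`. -/
noncomputable def gSh (A : List ℂ) (s : ℂ) (q : ℕ) : ℂ :=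
  ∏ p ∈ q.primeFactors,
    ((A.map (fun α => 1 - (p : ℂ) ^ (-s - α))).prod *
      ∑' j : ℕ, tauSh A (p ^ (j + q.factorization p)) * (p : ℂ) ^ (-(j : ℂ) * s))

/-- `G_A(s,q) = ∑_{d∣q} (μ(d)/φ(d)) d^s ∑_{e∣d} (μ(e)/e^s) g_A(s, qe/d)`. -/
noncomputable def GSh (A : List ℂ) (s : ℂ) (q : ℕ) : ℂ :=
  ∑ d ∈ q.divisors, ((ArithmeticFunction.moebius d : ℂ) / (Nat.totient d : ℂ)) * (d : ℂ) ^ s *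
    ∑ e ∈ d.divisors, (ArithmeticFunction.moebius e : ℂ) / (e : ℂ) ^ s * gSh A s (q * e / d)

/-!
At a prime `p` both sides are expressed through complete homogeneous symmetric polynomials `h_n`.
Put `a = (p^{-1/2-α})_{α ∈ A'}`, `b = (p^{-1/2-s-β})_{β ∈ B'}`, `u = p^{-1/2+α̂}` and
`w = p^{-1/2+β̂+s}`. Since `p^{-1}` is one of the Euler roots of `A` at `1 - α̂`, the Möbius sum
defining `G_A(1 - α̂, p^d)` removes it, and `G_A(1 - α̂, p^d)` becomes
`∏_{α ∈ A'} (1 - p^{-1+α̂-α}) · p^{d/2} U_d` with `U_d = ∑_j h_{j+d}(a) u^j`. In the same way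
`G_B(1 - β̂, p^d)` is a product times `p^{d(1/2+s)} V_d` with `V_d = ∑_j h_{j+d}(b) w^j`. By
orthogonality of the exponentials the integral is `∑_k F_k G_k`, where `F_k = h_k(w, a)` and
`G_k = h_k(u, b)`, so what remains is
`∑_d (U_d V_d - u w U_{d+1} V_{d+1}) = (1 - u w) ∑_k F_k G_k`.
By `U_k = h_k(a) + u U_{k+1}` and `F_{k+1} = w F_k + h_{k+1}(a)`, and likewise for `V` and `G`, the
`k`-th terms of the two sides differ by `Q_k - Q_{k+1}`, where
`Q_k = (F_k + u U_{k+1}) (G_k + w V_{k+1}) - U_k V_k`; here `Q_0 = 0` and `Q_k → 0`.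
-/

open Filter Topology

section CompleteHomogeneous

variable {R : Type*} [CommSemiring R]

/-- The complete homogeneous symmetric polynomial `h_n` evaluated at the entries of `A`, encoded as
the `n`-th coefficient of its generating series `∏_{a ∈ A} (1 - a X)⁻¹`. -/
noncomputable def completeHomog (A : List R) (n : ℕ) : R :=
  PowerSeries.coeff n (A.map fun a => PowerSeries.mk (a ^ ·)).prod

lemma completeHomog_perm {A B : List R} (h : A.Perm B) : completeHomog A = completeHomog B := by
  funext n
  rw [completeHomog, completeHomog, (h.map _).prod_eq]

lemma completeHomog_nil (n : ℕ) : completeHomog ([] : List R) n = if n = 0 then 1 else 0 := by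
  simp [completeHomog, PowerSeries.coeff_one]

lemma completeHomog_cons (a : R) (A : List R) (n : ℕ) :
    completeHomog (a :: A) n =
      ∑ x ∈ Finset.HasAntidiagonal.antidiagonal n, a ^ x.1 * completeHomog A x.2 := by
  simp [completeHomog, PowerSeries.coeff_mul]

lemma completeHomog_zero (A : List R) : completeHomog A 0 = 1 := by
  induction A with
  | nil => simp [completeHomog_nil]
  | cons a A ih => simp [completeHomog_cons, ih]

lemma completeHomog_cons_succ (a : R) (A : List R) (n : ℕ) :
    completeHomog (a :: A) (n + 1) =
      a * completeHomog (a :: A) n + completeHomog A (n + 1) := by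
  rw [completeHomog_cons, completeHomog_cons, Finset.Nat.sum_antidiagonal_succ, Finset.mul_sum,
    add_comm]
  simp only [pow_succ', pow_zero, one_mul, mul_assoc]

lemma completeHomog_map_mul (t : R) (A : List R) (n : ℕ) :
    completeHomog (A.map (t * ·)) n = t ^ n * completeHomog A n := by
  induction A generalizing n with
  | nil => by_cases h : n = 0 <;> simp [completeHomog_nil, h]
  | cons a A ih =>
    rw [List.map_cons, completeHomog_cons, completeHomog_cons, Finset.mul_sum]
    refine Finset.sum_congr rfl fun x hx => ?_
    rw [← Finset.HasAntidiagonal.mem_antidiagonal.mp hx, ih]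
    ring

end CompleteHomogeneous

section GeneratingSeries

variable {𝕜 : Type*} [NormedField 𝕜] {A : List 𝕜}

lemma summable_norm_completeHomog (hA : ∀ a ∈ A, ‖a‖ < 1) :
    Summable fun n => ‖completeHomog A n‖ := by
  induction A with
  | nil => exact summable_of_ne_finset_zero (s := {0}) fun n hn => by simp_all [completeHomog_nil]
  | cons a A ih =>
    rw [List.forall_mem_cons] at hA
    simp only [completeHomog_cons]
    exact summable_norm_sum_mul_antidiagonal_of_summable_norm (f := (a ^ ·))
      (summable_norm_geometric_of_norm_lt_one hA.1) (ih hA.2)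

variable [CompleteSpace 𝕜]

lemma tsum_completeHomog (hA : ∀ a ∈ A, ‖a‖ < 1) :
    ∑' n, completeHomog A n = (A.map fun a => (1 - a)⁻¹).prod := by
  induction A with
  | nil => simp [completeHomog_nil]
  | cons a A ih =>
    rw [List.forall_mem_cons] at hA
    simp only [completeHomog_cons]
    rw [← tsum_mul_tsum_eq_tsum_sum_antidiagonal_of_summable_norm (f := (a ^ ·))
        (summable_norm_geometric_of_norm_lt_one hA.1) (summable_norm_completeHomog hA.2),
      tsum_geometric_of_norm_lt_one hA.1, ih hA.2, List.map_cons, List.prod_cons]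

lemma prod_one_sub_mul_tsum_completeHomog (hA : ∀ a ∈ A, ‖a‖ < 1) :
    (A.map fun a => 1 - a).prod * ∑' n, completeHomog A n = 1 := by
  have one_sub_mul_inv : ∀ a ∈ A, (1 - a) * (1 - a)⁻¹ = 1 := fun a ha =>
    mul_inv_cancel₀ <| sub_ne_zero.mpr fun h => (hA a ha).ne (by rw [← h, norm_one])
  rw [tsum_completeHomog hA, ← List.prod_map_mul, List.map_congr_left one_sub_mul_inv,
    List.map_const', List.prod_replicate, one_pow]

lemma tsum_completeHomog_mul_pow {z : 𝕜} (hz : ‖z‖ ≤ 1) (hA : ∀ a ∈ A, ‖a‖ < 1) :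
    ∑' n, completeHomog A n * z ^ n = (A.map fun a => (1 - z * a)⁻¹).prod := by
  have norm_lt_one : ∀ b ∈ A.map (z * ·), ‖b‖ < 1 := by
    simp only [List.forall_mem_map, norm_mul]
    exact fun a ha => (mul_le_of_le_one_left (norm_nonneg a) hz).trans_lt (hA a ha)
  simpa only [completeHomog_map_mul, mul_comm (z ^ _), List.map_map, Function.comp_def]
    using tsum_completeHomog norm_lt_one

lemma tsum_completeHomog_add_succ {a : 𝕜} (ha : ‖a‖ < 1) (hA : ∀ b ∈ A, ‖b‖ < 1) (d : ℕ) :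
    ∑' j, completeHomog A (j + (d + 1)) =
      ∑' j, completeHomog (a :: A) (j + (d + 1)) - a * ∑' j, completeHomog (a :: A) (j + d) := by
  have summable_shift (m : ℕ) : Summable fun j => completeHomog (a :: A) (j + m) :=
    (summable_nat_add_iff m).mpr
      (summable_norm_completeHomog (List.forall_mem_cons.mpr ⟨ha, hA⟩)).of_norm
  rw [← tsum_mul_left, ← (summable_shift _).tsum_sub ((summable_shift _).mul_left a)]
  simp only [← add_assoc, completeHomog_cons_succ, add_sub_cancel_left]

end GeneratingSeries

section TailSeries

variable {𝕜 : Type*} [NormedField 𝕜]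

/-- The power series `∑_{j ≥ 0} f(j + d) z^j` whose coefficients are those of `f` from index `d`
on. -/
noncomputable def tailSeries (f : ℕ → 𝕜) (z : 𝕜) (d : ℕ) : 𝕜 :=
  ∑' j, f (j + d) * z ^ j

lemma norm_mul_pow_le_norm (a : 𝕜) {z : 𝕜} (hz : ‖z‖ ≤ 1) (j : ℕ) : ‖a * z ^ j‖ ≤ ‖a‖ := by
  rw [norm_mul, norm_pow]
  exact mul_le_of_le_one_right (norm_nonneg _) (pow_le_one₀ (norm_nonneg _) hz)

variable {f : ℕ → 𝕜} {z : 𝕜}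

lemma tendsto_tailSeries (hf : Summable fun n => ‖f n‖) (hz : ‖z‖ ≤ 1) :
    Tendsto (tailSeries f z) atTop (𝓝 0) := by
  refine squeeze_zero_norm (fun d => ?_) (tendsto_sum_nat_add fun n => ‖f n‖)
  exact tsum_of_norm_bounded ((summable_nat_add_iff d).mpr hf).hasSum
    fun j => norm_mul_pow_le_norm _ hz j

lemma tailSeries_eq_add [CompleteSpace 𝕜] (hf : Summable fun n => ‖f n‖) (hz : ‖z‖ ≤ 1) (d : ℕ) :
    tailSeries f z d = f d + z * tailSeries f z (d + 1) := by
  have summable_tail : Summable fun j => f (j + d) * z ^ j :=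
    .of_norm_bounded ((summable_nat_add_iff d).mpr hf) fun j => norm_mul_pow_le_norm _ hz j
  rw [tailSeries, tailSeries, summable_tail.tsum_eq_zero_add, ← tsum_mul_left]
  congr 1
  · simp
  · exact tsum_congr fun j => by rw [add_right_comm, add_assoc, pow_succ]; ring

end TailSeries

section Telescoping

lemma tsum_sub_succ {M : Type*} [AddCommGroup M] [TopologicalSpace M] [ContinuousSub M]
    [T2Space M] {Q : ℕ → M} (hQ : Tendsto Q atTop (𝓝 0))
    (hs : Summable fun k => Q k - Q (k + 1)) : ∑' k, (Q k - Q (k + 1)) = Q 0 := by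
  refine tendsto_nhds_unique hs.hasSum.tendsto_sum_nat ?_
  simpa only [Finset.sum_range_sub', sub_zero] using hQ.const_sub (Q 0)

variable {𝕜 : Type*} [NormedField 𝕜] [CompleteSpace 𝕜] {f g F G : ℕ → 𝕜} {u w : 𝕜}

lemma summable_tailSeries_mul_sub (hf : Summable fun n => ‖f n‖) (hg : Summable fun n => ‖g n‖)
    (hu : ‖u‖ ≤ 1) (hw : ‖w‖ ≤ 1) :
    Summable fun d => tailSeries f u d * tailSeries g w d
      - u * w * (tailSeries f u (d + 1) * tailSeries g w (d + 1)) := by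
  have tendsto_f := Nat.cofinite_eq_atTop ▸ tendsto_tailSeries hf hu
  have tendsto_g := Nat.cofinite_eq_atTop ▸ tendsto_tailSeries hg hw
  have tendsto_g' := Nat.cofinite_eq_atTop ▸ hg.of_norm.tendsto_atTop_zero
  refine (((hf.mul_tendsto_const tendsto_g).add (hg.mul_tendsto_const tendsto_f)).sub
    (hf.mul_tendsto_const tendsto_g')).congr fun d => ?_
  rw [tailSeries_eq_add hf hu d, tailSeries_eq_add hg hw d]
  ring

theorem tsum_tailSeries_mul_sub
    (hf : Summable fun n => ‖f n‖) (hg : Summable fun n => ‖g n‖)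
    (hF : Summable fun n => ‖F n‖) (hG : Summable fun n => ‖G n‖)
    (hu : ‖u‖ ≤ 1) (hw : ‖w‖ ≤ 1)
    (hF_zero : F 0 = f 0) (hF_succ : ∀ k, F (k + 1) = w * F k + f (k + 1))
    (hG_zero : G 0 = g 0) (hG_succ : ∀ k, G (k + 1) = u * G k + g (k + 1)) :
    ∑' d, (tailSeries f u d * tailSeries g w d
        - u * w * (tailSeries f u (d + 1) * tailSeries g w (d + 1)))
      = (1 - u * w) * ∑' k, F k * G k := by
  set U := tailSeries f u
  set V := tailSeries g w
  let Q (k : ℕ) : 𝕜 := (F k + u * U (k + 1)) * (G k + w * V (k + 1)) - U k * V k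
  have U_eq (k) : U k = f k + u * U (k + 1) := tailSeries_eq_add hf hu k
  have V_eq (k) : V k = g k + w * V (k + 1) := tailSeries_eq_add hg hw k
  have tendsto_U : Tendsto U atTop (𝓝 0) := tendsto_tailSeries hf hu
  have tendsto_V : Tendsto V atTop (𝓝 0) := tendsto_tailSeries hg hw
  have tendsto_Q : Tendsto Q atTop (𝓝 0) := by
    have shift := tendsto_add_atTop_nat 1
    simpa using ((hF.of_norm.tendsto_atTop_zero.add ((tendsto_U.comp shift).const_mul u)).mul
      (hG.of_norm.tendsto_atTop_zero.add ((tendsto_V.comp shift).const_mul w))).sub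
      (tendsto_U.mul tendsto_V)
  have Q_zero : Q 0 = 0 := by
    simp only [Q, U_eq 0, V_eq 0, hF_zero, hG_zero, sub_self]
  have F_succ_add (k) : F (k + 1) + u * U (k + 1 + 1) = w * F k + U (k + 1) := by
    rw [hF_succ, U_eq (k + 1), add_assoc]
  have G_succ_add (k) : G (k + 1) + w * V (k + 1 + 1) = u * G k + V (k + 1) := by
    rw [hG_succ, V_eq (k + 1), add_assoc]
  have telescope (k) : (1 - u * w) * (F k * G k)
      - (U k * V k - u * w * (U (k + 1) * V (k + 1))) = Q k - Q (k + 1) := by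
    simp only [Q, F_succ_add, G_succ_add]
    ring
  have summable_FG : Summable fun k => (1 - u * w) * (F k * G k) :=
    (hF.mul_tendsto_const (Nat.cofinite_eq_atTop ▸ hG.of_norm.tendsto_atTop_zero)).mul_left _
  have summable_UV := summable_tailSeries_mul_sub hf hg hu hw
  have summable_Q := (summable_FG.sub summable_UV).congr telescope
  rw [← tsum_mul_left, eq_comm, ← sub_eq_zero, ← summable_FG.tsum_sub summable_UV,
    tsum_congr telescope, tsum_sub_succ tendsto_Q summable_Q, Q_zero]

theorem tsum_tailSeries_completeHomog_mul_sub {A B : List 𝕜} (hA : ∀ a ∈ A, ‖a‖ < 1)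
    (hB : ∀ b ∈ B, ‖b‖ < 1) (hu : ‖u‖ < 1) (hw : ‖w‖ < 1) :
    ∑' d, (tailSeries (completeHomog A) u d * tailSeries (completeHomog B) w d
        - u * w * (tailSeries (completeHomog A) u (d + 1) * tailSeries (completeHomog B) w (d + 1)))
      = (1 - u * w) * ∑' k, completeHomog (w :: A) k * completeHomog (u :: B) k :=
  tsum_tailSeries_mul_sub (summable_norm_completeHomog hA) (summable_norm_completeHomog hB)
    (summable_norm_completeHomog (List.forall_mem_cons.mpr ⟨hw, hA⟩))
    (summable_norm_completeHomog (List.forall_mem_cons.mpr ⟨hu, hB⟩)) hu.le hw.le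
    (by simp only [completeHomog_zero]) (completeHomog_cons_succ w A)
    (by simp only [completeHomog_zero]) (completeHomog_cons_succ u B)

end Telescoping

section CircleIntegral

lemma integral_exp_two_pi_I_int_mul (n : ℤ) :
    ∫ θ in (0 : ℝ)..1, exp (2 * Real.pi * I * n * θ) = if n = 0 then 1 else 0 := by
  split_ifs with hn
  · simp [hn]
  · have coeff_ne_zero : (2 * Real.pi * I * n : ℂ) ≠ 0 :=
      mul_ne_zero two_pi_I_ne_zero (Int.cast_ne_zero.mpr hn)
    have exp_eq_one : exp (2 * Real.pi * I * n * (1 : ℝ)) = 1 := by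
      rw [ofReal_one, mul_one, mul_comm, exp_int_mul_two_pi_mul_I]
    rw [integral_exp_mul_complex coeff_ne_zero, exp_eq_one]
    simp

lemma norm_exp_two_pi_I_mul (θ : ℝ) : ‖exp (2 * Real.pi * I * θ)‖ = 1 := by
  rw [norm_exp]
  simp

lemma norm_exp_neg_two_pi_I_mul (θ : ℝ) : ‖exp (-(2 * Real.pi * I * θ))‖ = 1 := by
  rw [exp_neg, norm_inv, norm_exp_two_pi_I_mul, inv_one]

lemma exp_neg_pow_mul_exp_pow (m n : ℕ) (θ : ℝ) :
    exp (-(2 * Real.pi * I * θ)) ^ m * exp (2 * Real.pi * I * θ) ^ n =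
      exp (2 * Real.pi * I * ((n - m : ℤ) : ℂ) * θ) := by
  rw [← exp_nat_mul, ← exp_nat_mul, ← exp_add]
  congr 1
  push_cast
  ring

lemma integral_tsum_mul_tsum {f g : ℕ → ℂ} (hf : Summable fun n => ‖f n‖)
    (hg : Summable fun n => ‖g n‖) :
    ∫ θ in (0 : ℝ)..1, (∑' m, f m * exp (-(2 * Real.pi * I * θ)) ^ m) *
        (∑' n, g n * exp (2 * Real.pi * I * θ) ^ n)
      = ∑' k, f k * g k := by
  let term (x : ℕ × ℕ) : C(ℝ, ℂ) :=
    ⟨fun θ => (f x.1 * exp (-(2 * Real.pi * I * θ)) ^ x.1) *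
      (g x.2 * exp (2 * Real.pi * I * θ) ^ x.2), by fun_prop⟩
  have norm_term (x θ) : ‖term x θ‖ = ‖f x.1‖ * ‖g x.2‖ := by
    simp [term, norm_exp_two_pi_I_mul, norm_exp_neg_two_pi_I_mul]
  have summable_norm_term : Summable fun x =>
      ‖(term x).restrict (⟨Set.uIcc 0 1, isCompact_uIcc⟩ : TopologicalSpace.Compacts ℝ)‖ := by
    refine .of_nonneg_of_le (fun _ => norm_nonneg _) (fun x => ?_)
      (hf.mul_of_nonneg hg (fun _ => norm_nonneg _) fun _ => norm_nonneg _)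
    exact (ContinuousMap.norm_le _ (by positivity)).mpr fun θ => (norm_term x θ).le
  have tsum_term (θ : ℝ) : (∑' m, f m * exp (-(2 * Real.pi * I * θ)) ^ m) *
      (∑' n, g n * exp (2 * Real.pi * I * θ) ^ n) = ∑' x, term x θ :=
    tsum_mul_tsum_of_summable_norm
      (by simpa [norm_exp_neg_two_pi_I_mul] using hf) (by simpa [norm_exp_two_pi_I_mul] using hg)
  have integral_term (x) : ∫ θ in (0 : ℝ)..1, term x θ =
      if x.1 = x.2 then f x.1 * g x.2 else 0 := by
    simp only [term, ContinuousMap.coe_mk, mul_mul_mul_comm (f _), exp_neg_pow_mul_exp_pow]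
    rw [intervalIntegral.integral_const_mul, integral_exp_two_pi_I_int_mul]
    simp [sub_eq_zero, eq_comm]
  have diag_injective : Function.Injective fun k : ℕ => (k, k) := fun _ _ h => congrArg Prod.fst h
  rw [intervalIntegral.integral_congr fun θ _ => tsum_term θ,
    ← intervalIntegral.tsum_intervalIntegral_eq_of_summable_norm summable_norm_term,
    tsum_congr integral_term, ← diag_injective.tsum_eq]
  · simp
  · rintro ⟨m, n⟩ hmn
    simp_all

lemma integral_prod_inv_mul_prod_inv {A B : List ℂ} (hA : ∀ a ∈ A, ‖a‖ < 1)
    (hB : ∀ b ∈ B, ‖b‖ < 1) :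
    ∫ θ in (0 : ℝ)..1,
        (A.map fun a => (1 - exp (-(2 * Real.pi * I * θ)) * a)⁻¹).prod *
        (B.map fun b => (1 - exp (2 * Real.pi * I * θ) * b)⁻¹).prod
      = ∑' k, completeHomog A k * completeHomog B k := by
  simp only [← tsum_completeHomog_mul_pow (norm_exp_neg_two_pi_I_mul _).le hA,
    ← tsum_completeHomog_mul_pow (norm_exp_two_pi_I_mul _).le hB]
  exact integral_tsum_mul_tsum (summable_norm_completeHomog hA) (summable_norm_completeHomog hB)

end CircleIntegral

section EulerRoots

/-- The reciprocal roots `p^{-σ-α}`, `α ∈ A`, of the Euler factor at `p` of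
`∏_{α ∈ A} ζ(σ + α)`. -/
noncomputable def eulerRoots (p : ℕ) (σ : ℂ) (A : List ℂ) : List ℂ :=
  A.map fun α => (p : ℂ) ^ (-σ - α)

variable {p : ℕ}

lemma norm_natCast_cpow_lt_one (hp : 1 < p) {z : ℂ} (hz : z.re < 0) : ‖(p : ℂ) ^ z‖ < 1 := by
  rw [norm_natCast_cpow_of_pos (zero_lt_one.trans hp)]
  exact Real.rpow_lt_one_of_one_lt_of_neg (mod_cast hp) hz

lemma norm_lt_one_of_mem_eulerRoots (hp : 1 < p) {σ : ℂ} {A : List ℂ}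
    (hA : ∀ α ∈ A, 0 < (σ + α).re) : ∀ a ∈ eulerRoots p σ A, ‖a‖ < 1 :=
  List.forall_mem_map.mpr fun α hα => norm_natCast_cpow_lt_one hp <| by
    rw [← neg_add', neg_re, neg_neg_iff_pos]
    exact hA α hα

lemma completeHomog_eulerRoots (hp : p ≠ 0) (σ τ : ℂ) (A : List ℂ) (n : ℕ) :
    completeHomog (eulerRoots p σ A) n =
      (p : ℂ) ^ (n * (τ - σ)) * completeHomog (eulerRoots p τ A) n := by
  have rescale : eulerRoots p σ A = (eulerRoots p τ A).map ((p : ℂ) ^ (τ - σ) * ·) := by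
    simp only [eulerRoots, List.map_map, Function.comp_def,
      ← cpow_add _ _ (Nat.cast_ne_zero.mpr hp : (p : ℂ) ≠ 0)]
    congr! 3
    ring
  rw [rescale, completeHomog_map_mul, cpow_nat_mul]

lemma completeHomog_eulerRoots_append_singleton (σ : ℂ) (A : List ℂ) (c : ℂ) :
    completeHomog (eulerRoots p σ (A ++ [c])) =
      completeHomog ((p : ℂ) ^ (-σ - c) :: eulerRoots p σ A) :=
  completeHomog_perm ((List.perm_append_singleton c A).map _)

lemma eulerRoots_map_add (σ t : ℂ) (A : List ℂ) :
    eulerRoots p σ (A.map (· + t)) = eulerRoots p (σ + t) A := by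
  simp only [eulerRoots, List.map_map, Function.comp_def]
  congr! 3
  ring

lemma integral_prod_inv_one_sub_cpow (hp : 1 < p) {C D : List ℂ}
    (hC : ∀ c ∈ C, -(1 / 2) < c.re) (hD : ∀ d ∈ D, -(1 / 2) < d.re) :
    ∫ θ in (0 : ℝ)..1,
        (C.map fun c => (1 - exp (-(2 * Real.pi * I * θ)) * (p : ℂ) ^ (-(1 / 2 : ℂ) - c))⁻¹).prod *
        (D.map fun d => (1 - exp (2 * Real.pi * I * θ) * (p : ℂ) ^ (-(1 / 2 : ℂ) - d))⁻¹).prod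
      = ∑' k, completeHomog (eulerRoots p (1 / 2) C) k *
          completeHomog (eulerRoots p (1 / 2) D) k := by
  have half_add_re_pos {z : ℂ} (hz : -(1 / 2) < z.re) : 0 < (1 / 2 + z).re := by
    norm_num
    linarith
  rw [← integral_prod_inv_mul_prod_inv
    (norm_lt_one_of_mem_eulerRoots hp fun c hc => half_add_re_pos (hC c hc))
    (norm_lt_one_of_mem_eulerRoots hp fun d hd => half_add_re_pos (hD d hd))]
  simp only [eulerRoots, List.map_map, Function.comp_def]

end EulerRoots

section LocalFactors

variable {p : ℕ}

lemma tauSh_prime_pow (hp : p.Prime) (A : List ℂ) (n : ℕ) :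
    tauSh A (p ^ n) = completeHomog (eulerRoots p 0 A) n := by
  induction A generalizing n with
  | nil => simp [tauSh, eulerRoots, completeHomog_nil, hp.ne_one]
  | cons a A ih =>
    rw [tauSh, eulerRoots, List.map_cons, completeHomog_cons, Nat.sum_divisors_prime_pow hp,
      Finset.Nat.sum_antidiagonal_eq_sum_range_succ_mk]
    refine Finset.sum_congr rfl fun k hk => ?_
    rw [Nat.pow_div (Finset.mem_range_succ_iff.mp hk) hp.pos, ih, Nat.cast_pow,
      ← natCast_cpow_natCast_mul, cpow_nat_mul, neg_zero, zero_sub, eulerRoots]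
    simp

lemma gSh_prime_pow (hp : p.Prime) {A : List ℂ} {s : ℂ} (hA : ∀ α ∈ A, 0 < (s + α).re) (d : ℕ) :
    gSh A s (p ^ d) = ((eulerRoots p s A).map fun a => 1 - a).prod *
      ((p : ℂ) ^ (d * s) * ∑' j, completeHomog (eulerRoots p s A) (j + d)) := by
  rcases eq_or_ne d 0 with rfl | hd
  · have := prod_one_sub_mul_tsum_completeHomog (norm_lt_one_of_mem_eulerRoots hp.one_lt hA)
    simp [gSh, this]
  have hp0 : (p : ℂ) ≠ 0 := Nat.cast_ne_zero.mpr hp.ne_zero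
  rw [gSh, Nat.primeFactors_prime_pow hd hp, Finset.prod_singleton]
  congr 1
  · rw [eulerRoots, List.map_map]
    rfl
  · rw [← tsum_mul_left]
    refine tsum_congr fun j => ?_
    rw [hp.factorization_pow, Finsupp.single_eq_same, tauSh_prime_pow hp,
      completeHomog_eulerRoots hp.ne_zero 0 s, mul_right_comm, ← cpow_add _ _ hp0]
    congr 2
    push_cast
    ring

lemma GSh_prime_pow_succ (hp : p.Prime) (A : List ℂ) (s : ℂ) (d : ℕ) :
    GSh A s (p ^ (d + 1)) = (1 - (p : ℂ)⁻¹)⁻¹ *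
      (gSh A s (p ^ (d + 1)) - (p : ℂ) ^ (s - 1) * gSh A s (p ^ d)) := by
  have hp0 : (p : ℂ) ≠ 0 := Nat.cast_ne_zero.mpr hp.ne_zero
  have hp1 : (p : ℂ) - 1 ≠ 0 := sub_ne_zero.mpr (mod_cast hp.ne_one)
  have hps : (p : ℂ) ^ s ≠ 0 := by simp [cpow_eq_zero_iff, hp0]
  have moebius_eq_zero (k : ℕ) : ArithmeticFunction.moebius (p ^ (k + 1 + 1)) = 0 := by
    rw [ArithmeticFunction.moebius_apply_prime_pow hp (by omega), if_neg (by omega)]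
  have pow_succ_div : p ^ (d + 1) / p = p ^ d := by
    rw [pow_succ, Nat.mul_div_cancel _ hp.pos]
  have inv_eq : (1 - (p : ℂ)⁻¹)⁻¹ = p / (p - 1) := by field_simp
  rw [GSh, Nat.sum_divisors_prime_pow hp, Finset.sum_range_succ', Finset.sum_range_succ']
  simp only [moebius_eq_zero, Int.cast_zero, zero_div, zero_mul, Finset.sum_const_zero, zero_add,
    pow_one, pow_zero, hp.sum_divisors, ArithmeticFunction.moebius_apply_prime hp,
    Nat.totient_prime hp, Nat.divisors_one, Finset.sum_singleton,
    ArithmeticFunction.moebius_apply_one, Nat.totient_one, mul_one, Nat.div_one,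
    Nat.mul_div_cancel _ hp.pos, pow_succ_div, Nat.cast_one, Nat.cast_pred hp.pos, one_cpow,
    Int.cast_one, Int.cast_neg, cpow_sub _ _ hp0, cpow_one, inv_eq]
  field_simp
  ring

lemma gSh_one_sub_prime_pow (hp : p.Prime) {A A' : List ℂ} {α₀ : ℂ} (hperm : A.Perm (α₀ :: A'))
    (hA' : ∀ α ∈ A', 0 < (1 - α₀ + α).re) (d : ℕ) :
    gSh A (1 - α₀) (p ^ d) =
      (1 - (p : ℂ)⁻¹) * ((eulerRoots p (1 - α₀) A').map fun a => 1 - a).prod *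
      ((p : ℂ) ^ (d * (1 - α₀)) *
        ∑' j, completeHomog ((p : ℂ)⁻¹ :: eulerRoots p (1 - α₀) A') (j + d)) := by
  have hA : ∀ α ∈ A, 0 < (1 - α₀ + α).re := fun α hα =>
    List.forall_mem_cons.mpr ⟨by simp, hA'⟩ α (hperm.subset hα)
  have root_eq_inv : (p : ℂ) ^ (-(1 - α₀) - α₀) = (p : ℂ)⁻¹ := by
    rw [neg_sub, sub_sub_cancel_left, cpow_neg_one]
  have roots_perm : (eulerRoots p (1 - α₀) A).Perm ((p : ℂ)⁻¹ :: eulerRoots p (1 - α₀) A') :=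
    root_eq_inv ▸ hperm.map _
  rw [gSh_prime_pow hp hA, (roots_perm.map _).prod_eq, completeHomog_perm roots_perm,
    List.map_cons, List.prod_cons]

lemma GSh_prime_pow (hp : p.Prime) {A A' : List ℂ} {α₀ : ℂ} (hperm : A.Perm (α₀ :: A'))
    (hA' : ∀ α ∈ A', 0 < (1 - α₀ + α).re) (d : ℕ) :
    GSh A (1 - α₀) (p ^ d) = ((eulerRoots p (1 - α₀) A').map fun a => 1 - a).prod *
      ((p : ℂ) ^ (d * (1 - α₀)) * ∑' j, completeHomog (eulerRoots p (1 - α₀) A') (j + d)) := by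
  have norm_lt_one := norm_lt_one_of_mem_eulerRoots hp.one_lt hA'
  cases d with
  | zero =>
    have := prod_one_sub_mul_tsum_completeHomog norm_lt_one
    simp [GSh, gSh, this]
  | succ d =>
    have hp0 : (p : ℂ) ≠ 0 := Nat.cast_ne_zero.mpr hp.ne_zero
    have norm_inv_lt_one : ‖(p : ℂ)⁻¹‖ < 1 := by
      rw [← cpow_neg_one]
      exact norm_natCast_cpow_lt_one hp.one_lt (by simp)
    have one_sub_inv_ne_zero : 1 - (p : ℂ)⁻¹ ≠ 0 :=
      sub_ne_zero.mpr fun h => norm_inv_lt_one.ne (by rw [← h, norm_one])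
    have cpow_mul_cpow : (p : ℂ) ^ (1 - α₀ - 1) * (p : ℂ) ^ (d * (1 - α₀)) =
        (p : ℂ) ^ (((d + 1 : ℕ) : ℂ) * (1 - α₀)) * (p : ℂ)⁻¹ := by
      rw [← cpow_neg_one, ← cpow_add _ _ hp0, ← cpow_add _ _ hp0]
      congr 1
      push_cast
      ring
    rw [GSh_prime_pow_succ hp, gSh_one_sub_prime_pow hp hperm hA',
      gSh_one_sub_prime_pow hp hperm hA', tsum_completeHomog_add_succ norm_inv_lt_one norm_lt_one,
      inv_mul_eq_iff_eq_mul₀ one_sub_inv_ne_zero]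
    linear_combination (-(1 - (p : ℂ)⁻¹) * ((eulerRoots p (1 - α₀) A').map fun a => 1 - a).prod *
      ∑' j, completeHomog ((p : ℂ)⁻¹ :: eulerRoots p (1 - α₀) A') (j + d)) * cpow_mul_cpow

lemma GSh_prime_pow_eq_tailSeries (hp : p.Prime) {A A' : List ℂ} {α₀ : ℂ}
    (hperm : A.Perm (α₀ :: A')) (hA' : ∀ α ∈ A', 0 < (1 - α₀ + α).re) (σ : ℂ) (d : ℕ) :
    GSh A (1 - α₀) (p ^ d) = ((eulerRoots p (1 - α₀) A').map fun a => 1 - a).prod *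
      ((p : ℂ) ^ (d * σ) *
        tailSeries (completeHomog (eulerRoots p σ A')) ((p : ℂ) ^ (σ - (1 - α₀))) d) := by
  have hp0 : (p : ℂ) ≠ 0 := Nat.cast_ne_zero.mpr hp.ne_zero
  rw [GSh_prime_pow hp hperm hA', tailSeries]
  congr 1
  rw [← tsum_mul_left, ← tsum_mul_left]
  refine tsum_congr fun j => ?_
  have cpow_mul_cpow : (p : ℂ) ^ (d * (1 - α₀)) * (p : ℂ) ^ (((j + d : ℕ) : ℂ) * (σ - (1 - α₀))) =
      (p : ℂ) ^ (d * σ) * (p : ℂ) ^ (j * (σ - (1 - α₀))) := by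
    rw [← cpow_add _ _ hp0, ← cpow_add _ _ hp0]
    congr 1
    push_cast
    ring
  rw [completeHomog_eulerRoots hp.ne_zero (1 - α₀) σ, ← cpow_nat_mul]
  linear_combination completeHomog (eulerRoots p σ A') (j + d) * cpow_mul_cpow

end LocalFactors

lemma prod_prod_append_singleton {ι κ M : Type*} [CommMonoid M] (F : ι → κ → M) (A : List ι)
    (B : List κ) (c : ι) (d : κ) :
    ((A ++ [c]).map fun x => ((B ++ [d]).map fun y => F x y).prod).prod =
      (A.map fun x => (B.map fun y => F x y).prod).prod * (A.map fun x => F x d).prod *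
        (B.map fun y => F c y).prod * F c d := by
  simp only [List.map_append, List.prod_append, List.map_singleton, List.prod_singleton,
    List.prod_map_mul, mul_assoc]

section LocalIdentity

variable {p : ℕ} {A A' B B' : List ℂ} {α₀ β₀ s : ℂ}

lemma sum_GSh_mul_GSh (hp : p.Prime) (hA : A.Perm (α₀ :: A')) (hB : B.Perm (β₀ :: B'))
    (hA' : ∀ α ∈ A', 0 < (1 - α₀ + α).re) (hB' : ∀ β ∈ B', 0 < (1 - β₀ + β).re) (σ τ : ℂ)
    (d : ℕ) :
    ∑ q ∈ Finset.range 2,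
        (-1 : ℂ) ^ q * GSh A (1 - α₀) (p ^ (d + q)) * GSh B (1 - β₀) (p ^ (d + q))
        * (p : ℂ) ^ (-(d * (σ + τ)) - (q : ℂ) * (2 - α₀ - β₀)) =
      ((eulerRoots p (1 - α₀) A').map fun a => 1 - a).prod *
      ((eulerRoots p (1 - β₀) B').map fun b => 1 - b).prod *
      (tailSeries (completeHomog (eulerRoots p σ A')) ((p : ℂ) ^ (σ - (1 - α₀))) d *
          tailSeries (completeHomog (eulerRoots p τ B')) ((p : ℂ) ^ (τ - (1 - β₀))) d
        - (p : ℂ) ^ (σ - (1 - α₀)) * (p : ℂ) ^ (τ - (1 - β₀)) *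
          (tailSeries (completeHomog (eulerRoots p σ A')) ((p : ℂ) ^ (σ - (1 - α₀))) (d + 1) *
          tailSeries (completeHomog (eulerRoots p τ B')) ((p : ℂ) ^ (τ - (1 - β₀))) (d + 1))) := by
  have hp0 : (p : ℂ) ≠ 0 := Nat.cast_ne_zero.mpr hp.ne_zero
  have weight (q : ℕ) : (p : ℂ) ^ (-(d * (σ + τ)) - (q : ℂ) * (2 - α₀ - β₀)) =
      ((p : ℂ) ^ (((d + q : ℕ) : ℂ) * σ) * (p : ℂ) ^ (((d + q : ℕ) : ℂ) * τ))⁻¹ *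
        ((p : ℂ) ^ (σ - (1 - α₀)) * (p : ℂ) ^ (τ - (1 - β₀))) ^ q := by
    simp only [← cpow_add _ _ hp0, ← cpow_nat_mul, ← cpow_neg]
    congr 1
    push_cast
    ring
  have cpow_ne_zero (z : ℂ) : (p : ℂ) ^ z ≠ 0 := by simp [cpow_eq_zero_iff, hp0]
  simp only [GSh_prime_pow_eq_tailSeries hp hA hA' σ, GSh_prime_pow_eq_tailSeries hp hB hB' τ,
    weight, Finset.sum_range_succ, Finset.sum_range_zero, add_zero]
  field_simp [cpow_ne_zero]
  ring

lemma tsum_sum_GSh_mul_GSh (hp : p.Prime) (hA : A.Perm (α₀ :: A')) (hB : B.Perm (β₀ :: B'))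
    {σ τ : ℂ} (hσ : ∀ α ∈ A', 0 < (σ + α).re) (hτ : ∀ β ∈ B', 0 < (τ + β).re)
    (hσα : (σ - (1 - α₀)).re < 0) (hτβ : (τ - (1 - β₀)).re < 0) :
    ∑' d : ℕ, ∑ q ∈ Finset.range 2,
        (-1 : ℂ) ^ q * GSh A (1 - α₀) (p ^ (d + q)) * GSh B (1 - β₀) (p ^ (d + q))
        * (p : ℂ) ^ (-(d * (σ + τ)) - (q : ℂ) * (2 - α₀ - β₀)) =
      ((eulerRoots p (1 - α₀) A').map fun a => 1 - a).prod *
      ((eulerRoots p (1 - β₀) B').map fun b => 1 - b).prod *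
      ((1 - (p : ℂ) ^ (σ - (1 - α₀)) * (p : ℂ) ^ (τ - (1 - β₀))) *
        ∑' k, completeHomog ((p : ℂ) ^ (τ - (1 - β₀)) :: eulerRoots p σ A') k *
          completeHomog ((p : ℂ) ^ (σ - (1 - α₀)) :: eulerRoots p τ B') k) := by
  have re_pos {ρ γ₀ γ : ℂ} (hγ : 0 < (ρ + γ).re) (hγ₀ : (ρ - (1 - γ₀)).re < 0) :
      0 < (1 - γ₀ + γ).re := by
    simp only [add_re, sub_re] at hγ hγ₀ ⊢
    linarith
  rw [← tsum_tailSeries_completeHomog_mul_sub (norm_lt_one_of_mem_eulerRoots hp.one_lt hσ)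
    (norm_lt_one_of_mem_eulerRoots hp.one_lt hτ) (norm_natCast_cpow_lt_one hp.one_lt hσα)
    (norm_natCast_cpow_lt_one hp.one_lt hτβ), ← tsum_mul_left]
  exact tsum_congr <| sum_GSh_mul_GSh hp hA hB (fun α hα => re_pos (hσ α hα) hσα)
    (fun β hβ => re_pos (hτ β hβ) hτβ) σ τ

theorem stmt18_general (hA : A.Perm (α₀ :: A')) (hB : B.Perm (β₀ :: B'))
    (hC : ∀ c ∈ A' ++ [-β₀ - s], -(1 / 2) < c.re)
    (hD : ∀ d ∈ B'.map (fun β => β + s) ++ [-α₀], -(1 / 2) < d.re) (hp : p.Prime) :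
    (A'.map fun α => (B'.map fun β => 1 - (p : ℂ) ^ (-1 - α - β - s)).prod).prod *
      (∑' d : ℕ, ∑ q ∈ Finset.range 2,
        (-1 : ℂ) ^ q * GSh A (1 - α₀) (p ^ (d + q)) * GSh B (1 - β₀) (p ^ (d + q))
          * (p : ℂ) ^ (-(d : ℂ) - (d : ℂ) * s - (q : ℂ) * (2 - α₀ - β₀)))
    = ((A' ++ [-β₀ - s]).map fun c => ((B'.map (fun β => β + s) ++ [-α₀]).map fun d =>
          1 - (p : ℂ) ^ (-1 - c - d)).prod).prod *
      ∫ θ in (0 : ℝ)..1,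
        ((A' ++ [-β₀ - s]).map fun c =>
          (1 - exp (-(2 * Real.pi * I * θ)) * (p : ℂ) ^ (-(1 / 2 : ℂ) - c))⁻¹).prod *
        ((B'.map (fun β => β + s) ++ [-α₀]).map fun d =>
          (1 - exp (2 * Real.pi * I * θ) * (p : ℂ) ^ (-(1 / 2 : ℂ) - d))⁻¹).prod := by
  have hp0 : (p : ℂ) ≠ 0 := Nat.cast_ne_zero.mpr hp.ne_zero
  rw [integral_prod_inv_one_sub_cpow hp.one_lt hC hD, prod_prod_append_singleton,
    completeHomog_eulerRoots_append_singleton, completeHomog_eulerRoots_append_singleton,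
    eulerRoots_map_add]
  simp only [List.forall_mem_append, List.forall_mem_map, List.forall_mem_singleton, add_re,
    sub_re, neg_re] at hC hD
  have hσ : ∀ α ∈ A', 0 < (1 / 2 + α).re := fun α hα => by norm_num; linarith [hC.1 α hα]
  have hτ : ∀ β ∈ B', 0 < (1 / 2 + s + β).re := fun β hβ => by norm_num; linarith [hD.1 β hβ]
  have hσα : (1 / 2 - (1 - α₀)).re < 0 := by norm_num; linarith
  have hτβ : (1 / 2 + s - (1 - β₀)).re < 0 := by norm_num; linarith
  have weight (d q : ℕ) : -(d : ℂ) - d * s - q * (2 - α₀ - β₀) =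
      -(d * (1 / 2 + (1 / 2 + s))) - q * (2 - α₀ - β₀) := by ring
  have cross (α β : ℂ) : -1 - α - β - s = -1 - α - (β + s) := by ring
  have column (α : ℂ) : -1 - α - -α₀ = -(1 - α₀) - α := by ring
  have row (β : ℂ) : -1 - (-β₀ - s) - (β + s) = -(1 - β₀) - β := by ring
  have corner : -1 - (-β₀ - s) - -α₀ = (1 / 2 - (1 - α₀)) + (1 / 2 + s - (1 - β₀)) := by ring
  have new_root_C : -(1 / 2) - (-β₀ - s) = 1 / 2 + s - (1 - β₀) := by ring
  have new_root_D : -(1 / 2) - -α₀ = 1 / 2 - (1 - α₀) := by ring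
  rw [corner, cpow_add (1 / 2 - (1 - α₀)) _ hp0]
  simp only [weight, tsum_sum_GSh_mul_GSh hp hA hB hσ hτ hσα hτβ, eulerRoots, List.map_map,
    Function.comp_def, cross, column, row, new_root_C, new_root_D]
  ring

end LocalIdentity

/-- Let A, B be tuples all of whose entries have |ℜ| < 1/16, with
distinguished entries α̂ ∈ A, β̂ ∈ B; A′ = A minus α̂, B′ = B minus β̂. Let |ℜs| < 1/16,
and set C := A′ ∪ {−β̂−s}, D := B′_s ∪ {−α̂}. Then for every prime p,
∏_{α∈A′,β∈B′}(1−p^{−1−α−β−s}) Σ_{d≥0} Σ_{q=0}^{1} (−1)^q G_A(1−α̂,p^{d+q})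
    G_B(1−β̂,p^{d+q}) p^{−d−ds−q(2−α̂−β̂)}
  = ∏_{c∈C,d′∈D}(1−p^{−1−c−d′}) ·
    ∫₀¹ ∏_{c∈C}(1−e(−θ)p^{−1/2−c})^{−1} ∏_{d′∈D}(1−e(θ)p^{−1/2−d′})^{−1} dθ. -/
theorem stmt18 (L₁ L₂ M₁ M₂ : List ℂ) (αh βh : ℂ)
    (hA : ∀ α ∈ L₁ ++ αh :: L₂, |α.re| < 1/16)
    (hB : ∀ β ∈ M₁ ++ βh :: M₂, |β.re| < 1/16)
    (s : ℂ) (hs : |s.re| < 1/16) (p : ℕ) (hp : p.Prime) :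
    ((L₁ ++ L₂).map (fun α =>
        ((M₁ ++ M₂).map (fun β => 1 - (p : ℂ) ^ (-1 - α - β - s))).prod)).prod *
      (∑' d : ℕ, ∑ q ∈ Finset.range 2,
        (-1 : ℂ) ^ q * GSh (L₁ ++ αh :: L₂) (1 - αh) (p ^ (d + q))
          * GSh (M₁ ++ βh :: M₂) (1 - βh) (p ^ (d + q))
          * (p : ℂ) ^ (-(d : ℂ) - (d : ℂ) * s - (q : ℂ) * (2 - αh - βh)))
    = (((L₁ ++ L₂) ++ [-βh - s]).map (fun c =>
          ((((M₁ ++ M₂).map (fun β => β + s)) ++ [-αh]).map (fun d' =>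
            1 - (p : ℂ) ^ (-1 - c - d'))).prod)).prod *
      ∫ θ in (0:ℝ)..1,
        (((L₁ ++ L₂) ++ [-βh - s]).map (fun c =>
          (1 - Complex.exp (-(2 * Real.pi * Complex.I * θ)) * (p : ℂ) ^ (-(1/2 : ℂ) - c))⁻¹)).prod *
        ((((M₁ ++ M₂).map (fun β => β + s)) ++ [-αh]).map (fun d' =>
          (1 - Complex.exp (2 * Real.pi * Complex.I * θ) * (p : ℂ) ^ (-(1/2 : ℂ) - d'))⁻¹)).prod := by
  have hαh := hA αh (by simp)
  have hβh := hB βh (by simp)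
  refine stmt18_general List.perm_middle List.perm_middle ?_ ?_ hp <;>
    simp only [List.forall_mem_append, List.forall_mem_map, List.forall_mem_singleton, add_re,
      sub_re, neg_re] <;>
    grind
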